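/- Fix an integer d ≥ 1, p ∈ (1,∞), a penalty function φ, and let (μ_t)_{t≥0} be a convolution semigroup in 𝒫_p(ℝ^d) with 𝒲_p(μ_t, δ_0) → 0 as t ↓ 0. Then for every f ∈ D(A^μ) ∩ C₀¹(ℝ^d), the quotient (𝒮(t)f − f)/t converges uniformly on ℝ^d, as t ↓ 0, to the function x ↦ A^μ f(x) + φ*(|∇f(x)|); that is, lim_{t↓0} ‖(𝒮(t)f − f)/t − (A^μ f + φ*(|∇f|))‖_∞ = 0. -/

import Mathlib

open MeasureTheory Filter Topology ENNReal NNReal Set ZeroAtInfty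
noncomputable section

/-- Euclidean space ℝ^d. -/
abbrev Ed (d : ℕ) := EuclideanSpace ℝ (Fin d)

/-- `𝒫_p(ℝ^d)`: Borel probability measures with finite `p`-th moment. -/
def MemPp {d : ℕ} (p : ℝ) (μ : Measure (Ed d)) : Prop :=
  IsProbabilityMeasure μ ∧ ∫⁻ x, (‖x‖₊ : ℝ≥0∞) ^ p ∂μ < ∞

/-- `γ` is a coupling of `μ` and `ν`. -/
def IsCoupling {d : ℕ} (γ : Measure (Ed d × Ed d)) (μ ν : Measure (Ed d)) : Prop :=
  γ.map Prod.fst = μ ∧ γ.map Prod.snd = ν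

/-- The `p`-Wasserstein distance `𝒲_p(μ, ν)`. -/
def Wp {d : ℕ} (p : ℝ) (μ ν : Measure (Ed d)) : ℝ :=
  (⨅ γ ∈ {γ : Measure (Ed d × Ed d) | IsCoupling γ μ ν},
    (∫⁻ q, (‖q.2 - q.1‖₊ : ℝ≥0∞) ^ p ∂γ) ^ (1 / p)).toReal

/-- The scaled penalty `φ_t(r) = t·φ(r/t)` for `t > 0`; `φ_0(0) = 0`, `φ_0(r) = ∞` for `r > 0`. -/
def phit (φ : ℝ≥0 → ℝ≥0∞) (t : ℝ) (r : ℝ≥0) : ℝ≥0∞ :=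
  if 0 < t then (t.toNNReal : ℝ≥0∞) * φ (r / t.toNNReal) else (if r = 0 then 0 else ∞)

/-- `φ` is a penalty function: lower semicontinuous, convex, increasing, not constant,
`φ(0) = 0`, and `x ↦ φ(x^{1/p})` is convex. -/
structure IsPenalty (p : ℝ) (φ : ℝ≥0 → ℝ≥0∞) : Prop where
  lsc : LowerSemicontinuous φ
  convex : ∀ a b l m : ℝ≥0, l + m = 1 →
    φ (l * a + m * b) ≤ (l : ℝ≥0∞) * φ a + (m : ℝ≥0∞) * φ b
  mono : Monotone φ
  not_const : ∃ a b, φ a ≠ φ b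
  map_zero : φ 0 = 0
  convex_rpow : ∀ a b l m : ℝ≥0, l + m = 1 →
    φ ((l * a + m * b) ^ (1 / p)) ≤ (l : ℝ≥0∞) * φ (a ^ (1 / p)) + (m : ℝ≥0∞) * φ (b ^ (1 / p))

/-- The convex conjugate `φ*(y) = sup_{x ≥ 0} (xy − φ(x))`. -/
def phiStar (φ : ℝ≥0 → ℝ≥0∞) (y : ℝ≥0) : ℝ≥0∞ :=
  ⨆ x : ℝ≥0, ((x * y : ℝ≥0) : ℝ≥0∞) - φ x

/-- The one-step operator `S(t)f(x) = sup_ν ( ∫ f(x+y) ν(dy) − φ_t(𝒲_p(μ_t, ν)) )`. -/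
def Sop {d : ℕ} (p : ℝ) (φ : ℝ≥0 → ℝ≥0∞) (μt : Measure (Ed d)) (t : ℝ)
    (f : Ed d → ℝ) (x : Ed d) : ℝ :=
  sSup { r : ℝ | ∃ ν : Measure (Ed d), MemPp p ν ∧ ∃ c : ℝ, 0 ≤ c ∧
    phit φ t (Wp p μt ν).toNNReal ≤ ENNReal.ofReal c ∧ r = (∫ y, f (x + y) ∂ν) - c }

/-- The iterated operator `𝒮ⁿ(t) = S(2⁻ⁿ)^{∘ k} ∘ S(t − k·2⁻ⁿ)`, `k = ⌊2ⁿ t⌋`. -/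
def SiterN {d : ℕ} (p : ℝ) (φ : ℝ≥0 → ℝ≥0∞) (μ : ℝ → Measure (Ed d)) (n : ℕ) (t : ℝ)
    (f : Ed d → ℝ) : Ed d → ℝ :=
  (fun g => Sop p φ (μ ((2 : ℝ) ^ n)⁻¹) ((2 : ℝ) ^ n)⁻¹ g)^[⌊(2:ℝ)^n * t⌋₊]
    (Sop p φ (μ (t - ⌊(2:ℝ)^n * t⌋₊ * ((2:ℝ)^n)⁻¹)) (t - ⌊(2:ℝ)^n * t⌋₊ * ((2:ℝ)^n)⁻¹) f)

/-- The limiting operator `𝒮(t)f = lim_n 𝒮ⁿ(t)f` (a decreasing limit, i.e. an infimum). -/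
def Slim {d : ℕ} (p : ℝ) (φ : ℝ≥0 → ℝ≥0∞) (μ : ℝ → Measure (Ed d)) (t : ℝ)
    (f : Ed d → ℝ) (x : Ed d) : ℝ :=
  ⨅ n : ℕ, SiterN p φ μ n t f x

/-- `f ∈ C₀(ℝ^d)`: continuous and vanishing at infinity. -/
def IsC0 {d : ℕ} (f : Ed d → ℝ) : Prop :=
  Continuous f ∧ Tendsto f (cocompact (Ed d)) (𝓝 0)

/-- `(μ_t)_{t ≥ 0}` is a convolution semigroup in `𝒫_p(ℝ^d)`. -/
def IsConvSemigroup {d : ℕ} (p : ℝ) (μ : ℝ → Measure (Ed d)) : Prop :=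
  μ 0 = Measure.dirac 0 ∧ (∀ s t : ℝ, 0 ≤ s → 0 ≤ t → μ (s + t) = (μ s).conv (μ t)) ∧
    ∀ t : ℝ, 0 ≤ t → MemPp p (μ t)

/-- `𝒲_p(μ_t, δ_0) → 0` as `t ↓ 0`. -/
def WContinuousAtZero {d : ℕ} (p : ℝ) (μ : ℝ → Measure (Ed d)) : Prop :=
  Tendsto (fun t => Wp p (μ t) (Measure.dirac 0)) (𝓝[>] (0:ℝ)) (𝓝 0)

/-- The semigroup of the underlying Lévy process, `S^μ(t)f(x) = ∫ f(x+y) μ_t(dy)`. -/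
def Smu {d : ℕ} (μ : ℝ → Measure (Ed d)) (t : ℝ) (f : Ed d → ℝ) (x : Ed d) : ℝ :=
  ∫ y, f (x + y) ∂(μ t)

/-- `f ∈ D(A^μ)` with `A^μ f = Af`: `(S^μ(t)f − f)/t → Af` uniformly as `t ↓ 0`. -/
def HasGenerator {d : ℕ} (μ : ℝ → Measure (Ed d)) (f Af : Ed d → ℝ) : Prop :=
  TendstoUniformly (fun t x => (Smu μ t f x - f x) / t) Af (𝓝[>] (0:ℝ))

/-- `f ∈ C₀¹(ℝ^d)`: continuously differentiable, vanishing at infinity, with gradient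
vanishing at infinity. -/
def IsC01 {d : ℕ} (f : Ed d → ℝ) : Prop :=
  IsC0 f ∧ ContDiff ℝ 1 f ∧ Tendsto (fun x => gradient f x) (cocompact (Ed d)) (𝓝 0)

/-!
Write `W t = 𝒲_p(μ_t, δ_0)`. Both bounds compare `𝒮(t)f` with `S^μ(t)f`.

*Upper bound.* For `t < 1` the `n = 0` term of the infimum gives `𝒮(t)f ≤ S(t)f`. A competitor `ν`
at distance `𝒲_p(μ_t, ν) = t r` costs `t φ(r)` and gains at most `t r (|∇f(x)| + ε)`, by expanding
`f` to first order along an almost optimal coupling; this is legitimate once `W t + t r` is small.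
Fenchel–Young bounds gain minus cost by `t (φ*(|∇f(x)|) + r ε)`. Since `φ` grows superlinearly and
`f` is Lipschitz, values of `r` above a fixed `R` are never profitable.

*Lower bound.* Translating `μ_s` by `s v` costs at most `s φ(|v|)`, and these competitors form a
semigroup in `s`. The resulting lower bound for `S(s)` is therefore reproduced by every iterate
`𝒮ⁿ(t)`, and an almost optimal `v` parallel to `∇f(x)` recovers `φ*(|∇f(x)|)` as `t ↓ 0`.
-/

section BoundedUniformlyContinuous

/-- Bounded uniformly continuous functions: the class on which the one-step operator acts. -/
structure IsBUC {E F : Type*} [UniformSpace E] [SeminormedAddCommGroup F] (g : E → F) : Prop where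
  uniformContinuous : UniformContinuous g
  bounded : ∃ B, ∀ x, ‖g x‖ ≤ B

/-- Bounded differentiable functions with bounded uniformly continuous derivative. -/
structure IsBUC1 {E F : Type*} [NormedAddCommGroup E] [NormedSpace ℝ E] [NormedAddCommGroup F]
    [NormedSpace ℝ F] (f : E → F) : Prop where
  differentiable : Differentiable ℝ f
  bounded : ∃ B, ∀ x, ‖f x‖ ≤ B
  fderiv_isBUC : IsBUC (fderiv ℝ f)

variable {E F Ω : Type*} [NormedAddCommGroup E] [NormedAddCommGroup F] [MeasurableSpace Ω]

lemma isBUC_of_tendsto_cocompact {g : E → F} (hg : Continuous g)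
    (h0 : Tendsto g (cocompact E) (𝓝 0)) : IsBUC g where
  uniformContinuous := hg.uniformContinuous_of_tendsto_cocompact h0
  bounded :=
    let G : C₀(E, F) := ⟨⟨g, hg⟩, h0⟩
    ⟨‖G.toBCF‖, G.toBCF.norm_coe_le_norm⟩

lemma IsBUC.integrable_comp {g : E → F} (hg : IsBUC g) {P : Measure Ω} [IsFiniteMeasure P]
    {X : Ω → E} (hX : AEStronglyMeasurable X P) : Integrable (fun ω ↦ g (X ω)) P := by
  obtain ⟨B, hB⟩ := hg.bounded
  exact .of_bound (hg.uniformContinuous.continuous.comp_aestronglyMeasurable hX) B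
    (ae_of_all _ fun ω ↦ hB _)

variable [NormedSpace ℝ E] [NormedSpace ℝ F]

lemma IsBUC1.exists_lipschitzWith {f : E → F} (hf : IsBUC1 f) :
    ∃ K : ℝ≥0, LipschitzWith K f ∧ ∀ x, ‖fderiv ℝ f x‖ ≤ K := by
  obtain ⟨M, hM⟩ := hf.fderiv_isBUC.bounded
  lift M to ℝ≥0 using (norm_nonneg _).trans (hM 0)
  exact ⟨M, lipschitzWith_of_nnnorm_fderiv_le hf.differentiable hM, hM⟩

lemma IsBUC1.isBUC {f : E → F} (hf : IsBUC1 f) : IsBUC f :=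
  let ⟨_, hK, _⟩ := hf.exists_lipschitzWith
  ⟨hK.uniformContinuous, hf.bounded⟩

end BoundedUniformlyContinuous

section FirstOrderExpansion

variable {E F Ω : Type*} [NormedAddCommGroup E] [NormedAddCommGroup F] [MeasurableSpace Ω]
  {P : Measure Ω} {Y H : Ω → E} {p : ℝ}

lemma eLpNorm_ofReal_eq_lintegral (hp : 0 < p) (X : Ω → E) (P : Measure Ω) :
    eLpNorm X (ENNReal.ofReal p) P = (∫⁻ ω, (‖X ω‖₊ : ℝ≥0∞) ^ p ∂P) ^ (1 / p) := by
  rw [eLpNorm_eq_lintegral_rpow_enorm_toReal (by simpa using hp) ENNReal.ofReal_ne_top,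
    ENNReal.toReal_ofReal hp.le]
  rfl

lemma lintegral_enorm_le_eLpNorm [IsProbabilityMeasure P] (hp : 1 ≤ p)
    (hH : AEStronglyMeasurable H P) :
    ∫⁻ ω, ‖H ω‖ₑ ∂P ≤ eLpNorm H (ENNReal.ofReal p) P := by
  rw [← eLpNorm_one_eq_lintegral_enorm]
  exact eLpNorm_le_eLpNorm_of_exponent_le (by simpa using hp) hH

lemma integrable_of_eLpNorm_le_ofReal [IsProbabilityMeasure P] (hp : 1 ≤ p)
    (hH : AEStronglyMeasurable H P) {s : ℝ}
    (hHs : eLpNorm H (ENNReal.ofReal p) P ≤ ENNReal.ofReal s) : Integrable H P :=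
  MemLp.integrable (by simpa using hp) ⟨hH, hHs.trans_lt ENNReal.ofReal_lt_top⟩

lemma integral_norm_le_of_eLpNorm_le_ofReal [IsProbabilityMeasure P] (hp : 1 ≤ p)
    (hH : AEStronglyMeasurable H P) {s : ℝ} (hs : 0 ≤ s)
    (hHs : eLpNorm H (ENNReal.ofReal p) P ≤ ENNReal.ofReal s) : ∫ ω, ‖H ω‖ ∂P ≤ s := by
  rw [integral_norm_eq_lintegral_enorm hH]
  exact ENNReal.toReal_le_of_le_ofReal hs ((lintegral_enorm_le_eLpNorm hp hH).trans hHs)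

lemma lintegral_enorm_mul_rpow_le (hp : 1 < p) (hY : AEStronglyMeasurable Y P)
    (hH : AEStronglyMeasurable H P) :
    ∫⁻ ω, ‖H ω‖ₑ * (‖Y ω‖ₑ + ‖H ω‖ₑ) ^ (p - 1) ∂P ≤ eLpNorm H (ENNReal.ofReal p) P *
      (eLpNorm Y (ENNReal.ofReal p) P + eLpNorm H (ENNReal.ofReal p) P) ^ (p - 1) := by
  have hp0 : 0 < p := one_pos.trans hp
  have hpq := Real.HolderConjugate.conjExponent hp
  have hq : 1 / p.conjExponent = 1 / p * (p - 1) := by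
    rw [one_div, ← hpq.one_sub_inv]; field_simp
  simp only [eLpNorm_ofReal_eq_lintegral hp0]
  calc ∫⁻ ω, ‖H ω‖ₑ * (‖Y ω‖ₑ + ‖H ω‖ₑ) ^ (p - 1) ∂P
      ≤ (∫⁻ ω, ‖H ω‖ₑ ^ p ∂P) ^ (1 / p) *
          (∫⁻ ω, (‖Y ω‖ₑ + ‖H ω‖ₑ) ^ p ∂P) ^ (1 / p.conjExponent) :=
        ENNReal.lintegral_mul_rpow_le_lintegral_rpow_mul_lintegral_rpow hpq hH.enorm
          (hY.enorm.add hH.enorm)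
    _ ≤ _ := by
        rw [hq, ENNReal.rpow_mul]
        exact mul_le_mul_right (ENNReal.rpow_le_rpow
          (ENNReal.lintegral_Lp_add_le hY.enorm hH.enorm hp.le) (by linarith)) _

lemma IsBUC.exists_norm_sub_le_add_mul_rpow {g : E → F} (hg : IsBUC g) {α : ℝ} (hα : 0 ≤ α)
    {ε : ℝ≥0} (hε : 0 < ε) : ∃ C : ℝ≥0, ∀ z x, ‖g z - g x‖ ≤ ε + C * ‖z - x‖ ^ α := by
  obtain ⟨δ, hδ, hgδ⟩ := Metric.uniformContinuous_iff.1 hg.uniformContinuous ε hε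
  obtain ⟨M, hM⟩ := hg.bounded
  lift M to ℝ≥0 using (norm_nonneg _).trans (hM 0)
  lift δ to ℝ≥0 using hδ.le
  refine ⟨2 * M / δ ^ α, fun z x ↦ ?_⟩
  push_cast
  rcases lt_or_ge (dist z x) δ with hzx | hzx
  · exact (dist_eq_norm (g z) (g x) ▸ (hgδ hzx).le).trans (le_add_of_nonneg_right (by positivity))
  · rw [dist_eq_norm] at hzx
    have hone : 1 ≤ ‖z - x‖ ^ α / (δ : ℝ) ^ α := by
      rw [one_le_div (by positivity)]
      gcongr
    calc ‖g z - g x‖ ≤ 2 * M * 1 := by linarith [norm_sub_le (g z) (g x), hM z, hM x]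
      _ ≤ 2 * M * (‖z - x‖ ^ α / δ ^ α) := by gcongr
      _ = 0 + 2 * M / δ ^ α * ‖z - x‖ ^ α := by ring
      _ ≤ _ := by gcongr; exact ε.2

variable [NormedSpace ℝ E] [NormedSpace ℝ F] {f : E → F}

lemma enorm_sub_sub_fderiv_le (hf : Differentiable ℝ f) {α : ℝ} (hα : 0 ≤ α) {e C : ℝ≥0}
    (hmod : ∀ z x, ‖fderiv ℝ f z - fderiv ℝ f x‖ ≤ e + C * ‖z - x‖ ^ α) (x y h : E) :
    ‖f (x + y + h) - f (x + y) - fderiv ℝ f x h‖ₑ ≤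
      e * ‖h‖ₑ + C * (‖h‖ₑ * (‖y‖ₑ + ‖h‖ₑ) ^ α) := by
  have hball : ∀ z ∈ Metric.closedBall x (‖y‖ + ‖h‖),
      ‖fderiv ℝ f z - fderiv ℝ f x‖ ≤ e + C * (‖y‖ + ‖h‖) ^ α := fun z hz ↦ by
    rw [mem_closedBall_iff_norm] at hz
    exact (hmod z x).trans (by gcongr)
  have hmvt := (convex_closedBall x (‖y‖ + ‖h‖)).norm_image_sub_le_of_norm_fderiv_le' (𝕜 := ℝ)
    (x := x + y) (y := x + y + h) (fun z _ ↦ hf z) hball (by simp)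
    (by simpa [mem_closedBall_iff_norm, add_assoc] using norm_add_le y h)
  rw [add_sub_cancel_left] at hmvt
  have hnn : ‖f (x + y + h) - f (x + y) - fderiv ℝ f x h‖₊ ≤
      e * ‖h‖₊ + C * (‖h‖₊ * (‖y‖₊ + ‖h‖₊) ^ α) := by
    rw [← NNReal.coe_le_coe]
    push_cast
    exact hmvt.trans_eq (by ring)
  simp only [enorm_eq_nnnorm]
  rw [← ENNReal.coe_add, ← ENNReal.coe_rpow_of_nonneg _ hα]
  exact_mod_cast hnn

lemma enorm_integral_sub_sub_fderiv_le [IsProbabilityMeasure P] (hp : 1 < p)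
    (hf : Differentiable ℝ f) {e C : ℝ≥0}
    (hmod : ∀ z x, ‖fderiv ℝ f z - fderiv ℝ f x‖ ≤ e + C * ‖z - x‖ ^ (p - 1))
    (hY : AEStronglyMeasurable Y P) (hH : AEStronglyMeasurable H P) (x : E) :
    ‖∫ ω, f (x + Y ω + H ω) - f (x + Y ω) - fderiv ℝ f x (H ω) ∂P‖ₑ ≤
      (e + C * (eLpNorm Y (ENNReal.ofReal p) P + eLpNorm H (ENNReal.ofReal p) P) ^ (p - 1)) *
        eLpNorm H (ENNReal.ofReal p) P := by
  calc ‖∫ ω, f (x + Y ω + H ω) - f (x + Y ω) - fderiv ℝ f x (H ω) ∂P‖ₑ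
      ≤ ∫⁻ ω, (e * ‖H ω‖ₑ + C * (‖H ω‖ₑ * (‖Y ω‖ₑ + ‖H ω‖ₑ) ^ (p - 1))) ∂P :=
        (enorm_integral_le_lintegral_enorm _).trans <| lintegral_mono fun ω ↦
          enorm_sub_sub_fderiv_le hf (by linarith) hmod x (Y ω) (H ω)
    _ = e * ∫⁻ ω, ‖H ω‖ₑ ∂P + C * ∫⁻ ω, ‖H ω‖ₑ * (‖Y ω‖ₑ + ‖H ω‖ₑ) ^ (p - 1) ∂P := by
        rw [lintegral_add_left' (hH.enorm.const_mul _), lintegral_const_mul'' _ hH.enorm,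
          lintegral_const_mul' _ _ ENNReal.coe_ne_top]
    _ ≤ _ := by
        rw [add_mul, mul_assoc, mul_comm (_ ^ (p - 1))]
        gcongr
        exacts [lintegral_enorm_le_eLpNorm hp.le hH, lintegral_enorm_mul_rpow_le hp hY hH]

theorem IsBUC1.exists_enorm_integral_remainder_le (hp : 1 < p) (hf : IsBUC1 f) {ε : ℝ≥0}
    (hε : 0 < ε) : ∃ δ : ℝ≥0, 0 < δ ∧
      ∀ (P : Measure Ω) [IsProbabilityMeasure P] (Y H : Ω → E),
        AEStronglyMeasurable Y P → AEStronglyMeasurable H P →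
        eLpNorm Y (ENNReal.ofReal p) P + eLpNorm H (ENNReal.ofReal p) P ≤ δ →
        ∀ x, ‖∫ ω, f (x + Y ω + H ω) - f (x + Y ω) - fderiv ℝ f x (H ω) ∂P‖ₑ ≤
          ε * eLpNorm H (ENNReal.ofReal p) P := by
  have hp1 : 0 < p - 1 := sub_pos.2 hp
  -- The exponent `p - 1` makes the growing part of the modulus Hölder-dual to `H ∈ L^p`.
  obtain ⟨C, hC⟩ := hf.fderiv_isBUC.exists_norm_sub_le_add_mul_rpow hp1.le (half_pos hε)
  have hsmall : ∀ᶠ δ : ℝ≥0 in 𝓝[>] 0, C * δ ^ (p - 1) < ε / 2 := by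
    have hlim : Tendsto (fun δ : ℝ≥0 ↦ C * δ ^ (p - 1)) (𝓝 0) (𝓝 (C * 0 ^ (p - 1))) :=
      ((NNReal.continuous_rpow_const hp1.le).tendsto 0).const_mul C
    rw [NNReal.zero_rpow hp1.ne', mul_zero] at hlim
    exact (hlim.mono_left nhdsWithin_le_nhds).eventually_lt_const (half_pos hε)
  obtain ⟨δ, hδ, hδ0⟩ := (hsmall.and self_mem_nhdsWithin).exists
  refine ⟨δ, hδ0, fun P _ Y H hY hH hYH x ↦
    (enorm_integral_sub_sub_fderiv_le hp hf.differentiable hC hY hH x).trans ?_⟩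
  gcongr
  calc (↑(ε / 2) + C * (_ + _) ^ (p - 1) : ℝ≥0∞)
      ≤ ↑(ε / 2) + C * (δ : ℝ≥0∞) ^ (p - 1) := by gcongr
    _ = ↑(ε / 2 + C * δ ^ (p - 1)) := by
        push_cast [ENNReal.coe_rpow_of_nonneg δ hp1.le]; rfl
    _ ≤ ε := by
        rw [ENNReal.coe_le_coe]
        exact (add_le_add_right hδ.le _).trans_eq (add_halves ε)

theorem IsBUC1.exists_norm_integral_sub_le (hp : 1 < p) (hf : IsBUC1 f) {ε : ℝ} (hε : 0 < ε) :
    ∃ δ : ℝ, 0 < δ ∧ ∀ (P : Measure Ω) [IsProbabilityMeasure P] (Y H : Ω → E) (m s : ℝ),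
      AEStronglyMeasurable Y P → AEStronglyMeasurable H P → 0 ≤ m → 0 ≤ s → m + s ≤ δ →
      eLpNorm Y (ENNReal.ofReal p) P ≤ ENNReal.ofReal m →
      eLpNorm H (ENNReal.ofReal p) P ≤ ENNReal.ofReal s →
      ∀ x, ‖(∫ ω, f (x + Y ω + H ω) ∂P) - (∫ ω, f (x + Y ω) ∂P) -
        ∫ ω, fderiv ℝ f x (H ω) ∂P‖ ≤ ε * s := by
  lift ε to ℝ≥0 using hε.le
  obtain ⟨δ, hδ, hrem⟩ := hf.exists_enorm_integral_remainder_le (Ω := Ω) hp (NNReal.coe_pos.1 hε)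
  refine ⟨δ, hδ, fun P _ Y H m s hY hH hm hs hms hYm hHs x ↦ ?_⟩
  have hint : Integrable (fun ω ↦ fderiv ℝ f x (H ω)) P :=
    (fderiv ℝ f x).integrable_comp (integrable_of_eLpNorm_le_ofReal hp.le hH hHs)
  have hY' : Integrable (fun ω ↦ f (x + Y ω)) P := hf.isBUC.integrable_comp (hY.const_add x)
  have hYH : Integrable (fun ω ↦ f (x + Y ω + H ω)) P :=
    hf.isBUC.integrable_comp ((hY.const_add x).add hH)
  have hdiff : Integrable (fun ω ↦ f (x + Y ω + H ω) - f (x + Y ω)) P := hYH.sub hY'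
  rw [← integral_sub hYH hY', ← integral_sub hdiff hint,
    ← ENNReal.ofReal_le_ofReal_iff (by positivity), ofReal_norm, ENNReal.ofReal_mul ε.coe_nonneg,
    ENNReal.ofReal_coe_nnreal]
  refine (hrem P Y H hY hH ?_ x).trans (by gcongr)
  calc _ ≤ ENNReal.ofReal m + ENNReal.ofReal s := add_le_add hYm hHs
    _ ≤ δ := by
      rw [← ENNReal.ofReal_add hm hs, ← ENNReal.ofReal_coe_nnreal]
      exact ENNReal.ofReal_le_ofReal hms

end FirstOrderExpansion

section Wasserstein

variable {d : ℕ} {p : ℝ} {μ ν : Measure (Ed d)} {γ : Measure (Ed d × Ed d)}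

lemma memPp_iff_memLp (hp : 0 < p) :
    MemPp p μ ↔ IsProbabilityMeasure μ ∧ MemLp id (ENNReal.ofReal p) μ := by
  refine and_congr_right fun _ ↦ ?_
  rw [MemLp, eLpNorm_ofReal_eq_lintegral hp, ENNReal.rpow_lt_top_iff_of_pos (by positivity)]
  exact (and_iff_right aestronglyMeasurable_id).symm

lemma memPp_dirac (hp : 0 < p) (x : Ed d) : MemPp p (Measure.dirac x) :=
  ⟨inferInstance, by rw [lintegral_dirac]; finiteness⟩

lemma MemPp.map_add_const (hp : 0 < p) (hμ : MemPp p μ) (w : Ed d) :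
    MemPp p (μ.map (· + w)) := by
  obtain ⟨_, hLp⟩ := (memPp_iff_memLp hp).1 hμ
  refine (memPp_iff_memLp hp).2 ⟨Measure.isProbabilityMeasure_map (by fun_prop), ?_⟩
  rw [memLp_map_measure_iff aestronglyMeasurable_id (by fun_prop)]
  exact hLp.add (memLp_const w)

lemma isCoupling_prod [IsProbabilityMeasure μ] [IsProbabilityMeasure ν] :
    IsCoupling (μ.prod ν) μ ν :=
  ⟨by simp, by simp⟩

lemma IsCoupling.measurePreserving_fst (hγ : IsCoupling γ μ ν) :
    MeasurePreserving Prod.fst γ μ :=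
  ⟨measurable_fst, hγ.1⟩

lemma IsCoupling.measurePreserving_snd (hγ : IsCoupling γ μ ν) :
    MeasurePreserving Prod.snd γ ν :=
  ⟨measurable_snd, hγ.2⟩

lemma IsCoupling.isProbabilityMeasure [IsProbabilityMeasure μ] (hγ : IsCoupling γ μ ν) :
    IsProbabilityMeasure γ :=
  have : IsProbabilityMeasure (γ.map Prod.fst) := hγ.1.symm ▸ inferInstance
  Measure.isProbabilityMeasure_of_map Prod.fst

lemma IsCoupling.integral_fst (hγ : IsCoupling γ μ ν) {g : Ed d → ℝ} (hg : Continuous g) :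
    ∫ q, g q.1 ∂γ = ∫ y, g y ∂μ := by
  rw [← hγ.1, integral_map (by fun_prop) hg.aestronglyMeasurable]

lemma IsCoupling.integral_snd (hγ : IsCoupling γ μ ν) {g : Ed d → ℝ} (hg : Continuous g) :
    ∫ q, g q.2 ∂γ = ∫ y, g y ∂ν := by
  rw [← hγ.2, integral_map (by fun_prop) hg.aestronglyMeasurable]

lemma Wp_nonneg : 0 ≤ Wp p μ ν := ENNReal.toReal_nonneg

lemma Wp_eq_toReal_iInf_eLpNorm (hp : 0 < p) :
    Wp p μ ν = (⨅ γ, ⨅ _ : IsCoupling γ μ ν,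
      eLpNorm (fun q ↦ q.2 - q.1) (ENNReal.ofReal p) γ).toReal := by
  simp only [eLpNorm_ofReal_eq_lintegral hp]
  rfl

lemma iInf_eLpNorm_ne_top (hp : 0 < p) (hμ : MemPp p μ) (hν : MemPp p ν) :
    (⨅ γ, ⨅ _ : IsCoupling γ μ ν, eLpNorm (fun q ↦ q.2 - q.1) (ENNReal.ofReal p) γ) ≠ ∞ := by
  obtain ⟨_, hμLp⟩ := (memPp_iff_memLp hp).1 hμ
  obtain ⟨_, hνLp⟩ := (memPp_iff_memLp hp).1 hν
  have hγ : IsCoupling (μ.prod ν) μ ν := isCoupling_prod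
  have hcost := (hνLp.comp_measurePreserving hγ.measurePreserving_snd).sub
    (hμLp.comp_measurePreserving hγ.measurePreserving_fst)
  exact ne_top_of_le_ne_top hcost.eLpNorm_ne_top (iInf₂_le_of_le (μ.prod ν) hγ le_rfl)

lemma Wp_le_of_isCoupling (hp : 0 < p) (hγ : IsCoupling γ μ ν) {c : ℝ} (hc : 0 ≤ c)
    (h : eLpNorm (fun q ↦ q.2 - q.1) (ENNReal.ofReal p) γ ≤ ENNReal.ofReal c) :
    Wp p μ ν ≤ c := by
  rw [Wp_eq_toReal_iInf_eLpNorm hp]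
  exact ENNReal.toReal_le_of_le_ofReal hc ((iInf₂_le γ hγ).trans h)

lemma exists_isCoupling_eLpNorm_le (hp : 0 < p) (hμ : MemPp p μ) (hν : MemPp p ν) {s : ℝ}
    (hs : Wp p μ ν < s) : ∃ γ, IsCoupling γ μ ν ∧
      eLpNorm (fun q ↦ q.2 - q.1) (ENNReal.ofReal p) γ ≤ ENNReal.ofReal s := by
  rw [Wp_eq_toReal_iInf_eLpNorm hp,
    ← ENNReal.lt_ofReal_iff_toReal_lt (iInf_eLpNorm_ne_top hp hμ hν)] at hs
  obtain ⟨γ, hγ, hlt⟩ := by simpa only [iInf_lt_iff] using hs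
  exact ⟨γ, hγ, hlt.le⟩

lemma eLpNorm_id_le_Wp_dirac_zero (hp : 0 < p) (hμ : MemPp p μ) :
    eLpNorm id (ENNReal.ofReal p) μ ≤ ENNReal.ofReal (Wp p μ (Measure.dirac 0)) := by
  rw [Wp_eq_toReal_iInf_eLpNorm hp,
    ENNReal.ofReal_toReal (iInf_eLpNorm_ne_top hp hμ (memPp_dirac hp 0))]
  refine le_iInf₂ fun γ hγ ↦ ?_
  have hsnd : ∀ᵐ q ∂γ, q.2 = 0 := by
    refine hγ.measurePreserving_snd.quasiMeasurePreserving.ae (p := (· = 0)) ?_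
    rw [ae_dirac_eq, Filter.eventually_pure]
  rw [← eLpNorm_comp_measurePreserving aestronglyMeasurable_id hγ.measurePreserving_fst]
  refine (eLpNorm_congr_norm_ae ?_).le
  filter_upwards [hsnd] with q hq
  simp [hq]

lemma Wp_map_add_const_le [IsProbabilityMeasure μ] (hp : 0 < p) (w : Ed d) :
    Wp p μ (μ.map (· + w)) ≤ ‖w‖ := by
  have hγ : IsCoupling (μ.map fun y ↦ (y, y + w)) μ (μ.map (· + w)) := by
    constructor <;> rw [Measure.map_map (by fun_prop) (by fun_prop)]
    · exact Measure.map_id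
    · rfl
  refine Wp_le_of_isCoupling hp hγ (norm_nonneg w) ?_
  rw [eLpNorm_map_measure (by fun_prop) (by fun_prop)]
  have hcomp : (fun q : Ed d × Ed d ↦ q.2 - q.1) ∘ (fun y ↦ (y, y + w)) = fun _ ↦ w := by
    ext1 y; simp
  rw [hcomp, eLpNorm_const _ (by simpa using hp) (IsProbabilityMeasure.ne_zero μ)]
  simp

lemma Wp_self [IsProbabilityMeasure μ] (hp : 0 < p) : Wp p μ μ = 0 :=
  le_antisymm (by simpa using Wp_map_add_const_le (μ := μ) hp 0) Wp_nonneg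

lemma integral_sub_integral_le_mul_Wp (hp : 1 ≤ p) (hμ : MemPp p μ) (hν : MemPp p ν)
    {g : Ed d → ℝ} {K : ℝ≥0} (hg : LipschitzWith K g) (hgμ : Integrable g μ)
    (hgν : Integrable g ν) : (∫ y, g y ∂ν) - ∫ y, g y ∂μ ≤ K * Wp p μ ν := by
  have := hμ.1
  have hlim : Tendsto (fun s : ℝ ↦ (K : ℝ) * s) (𝓝[>] Wp p μ ν) (𝓝 (K * Wp p μ ν)) :=
    (tendsto_id.const_mul _).mono_left nhdsWithin_le_nhds
  refine ge_of_tendsto hlim ?_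
  filter_upwards [self_mem_nhdsWithin] with s hs
  obtain ⟨γ, hγ, hcost⟩ := exists_isCoupling_eLpNorm_le (one_pos.trans_le hp) hμ hν hs
  have := hγ.isProbabilityMeasure
  have hdisp : ∫ q, ‖q.2 - q.1‖ ∂γ ≤ s :=
    integral_norm_le_of_eLpNorm_le_ofReal hp (by fun_prop) (Wp_nonneg.trans hs.le) hcost
  have hint : Integrable (fun q : Ed d × Ed d ↦ ‖q.2 - q.1‖) γ :=
    (integrable_of_eLpNorm_le_ofReal hp (by fun_prop) hcost).norm
  have hg₁ : Integrable (fun q ↦ g q.1) γ :=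
    hγ.measurePreserving_fst.integrable_comp_of_integrable hgμ
  have hg₂ : Integrable (fun q ↦ g q.2) γ :=
    hγ.measurePreserving_snd.integrable_comp_of_integrable hgν
  rw [← hγ.integral_fst hg.continuous, ← hγ.integral_snd hg.continuous, ← integral_sub hg₂ hg₁]
  calc ∫ q, g q.2 - g q.1 ∂γ ≤ ∫ q, K * ‖q.2 - q.1‖ ∂γ :=
        integral_mono (hg₂.sub hg₁) (hint.const_mul _) fun q ↦
          (le_abs_self _).trans (hg.norm_sub_le q.2 q.1)
    _ ≤ K * s := by rw [integral_const_mul]; gcongr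

theorem IsBUC1.exists_integral_sub_integral_le_mul_Wp (hp : 1 < p) {f : Ed d → ℝ}
    (hf : IsBUC1 f) {ε : ℝ} (hε : 0 < ε) : ∃ δ, 0 < δ ∧ ∀ μ ν : Measure (Ed d),
      MemPp p μ → MemPp p ν → Wp p μ (Measure.dirac 0) + Wp p μ ν < δ →
      ∀ x, (∫ y, f (x + y) ∂ν) - ∫ y, f (x + y) ∂μ ≤ (‖fderiv ℝ f x‖ + ε) * Wp p μ ν := by
  have hp0 : 0 < p := one_pos.trans hp
  obtain ⟨δ, hδ, hrem⟩ := hf.exists_norm_integral_sub_le (Ω := Ed d × Ed d) hp hε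
  refine ⟨δ, hδ, fun μ ν hμ hν hsum x ↦ ?_⟩
  have := hμ.1
  have hlim : Tendsto (fun s ↦ (‖fderiv ℝ f x‖ + ε) * s) (𝓝[>] Wp p μ ν)
      (𝓝 ((‖fderiv ℝ f x‖ + ε) * Wp p μ ν)) :=
    (tendsto_id.const_mul _).mono_left nhdsWithin_le_nhds
  refine ge_of_tendsto hlim ?_
  filter_upwards [self_mem_nhdsWithin,
    nhdsWithin_le_nhds (gt_mem_nhds (lt_sub_iff_add_lt'.2 hsum))] with s hs hsδ
  obtain ⟨γ, hγ, hcost⟩ := exists_isCoupling_eLpNorm_le hp0 hμ hν hs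
  have := hγ.isProbabilityMeasure
  have hs0 : 0 ≤ s := Wp_nonneg.trans hs.le
  have hcont : Continuous fun y ↦ f (x + y) := hf.differentiable.continuous.comp (by fun_prop)
  have hfst : eLpNorm (fun q : Ed d × Ed d ↦ q.1) (ENNReal.ofReal p) γ ≤
      ENNReal.ofReal (Wp p μ (Measure.dirac 0)) :=
    (eLpNorm_comp_measurePreserving aestronglyMeasurable_id
      hγ.measurePreserving_fst).trans_le (eLpNorm_id_le_Wp_dirac_zero hp0 hμ)
  have hexp := hrem γ (fun q ↦ q.1) (fun q ↦ q.2 - q.1) _ s (by fun_prop) (by fun_prop)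
    Wp_nonneg hs0 (by linarith) hfst hcost x
  simp only [add_assoc, add_sub_cancel] at hexp
  rw [hγ.integral_fst hcont, hγ.integral_snd hcont] at hexp
  have hderiv : ∫ q, fderiv ℝ f x (q.2 - q.1) ∂γ ≤ ‖fderiv ℝ f x‖ * s := by
    have hint : Integrable (fun q : Ed d × Ed d ↦ q.2 - q.1) γ :=
      integrable_of_eLpNorm_le_ofReal hp.le (by fun_prop) hcost
    calc ∫ q, fderiv ℝ f x (q.2 - q.1) ∂γ ≤ ∫ q, ‖fderiv ℝ f x‖ * ‖q.2 - q.1‖ ∂γ :=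
          integral_mono ((fderiv ℝ f x).integrable_comp hint) (hint.norm.const_mul _) fun q ↦
            (le_abs_self _).trans ((fderiv ℝ f x).le_opNorm _)
      _ ≤ ‖fderiv ℝ f x‖ * s := by
          rw [integral_const_mul]
          gcongr
          exact integral_norm_le_of_eLpNorm_le_ofReal hp.le (by fun_prop) hs0 hcost
  linarith [(abs_le.1 hexp).2]

end Wasserstein

section Penalty

variable {φ : ℝ≥0 → ℝ≥0∞} {p : ℝ}

/-- Superlinear growth of `φ`: it makes `φ*` finite and confines the displacements that matter
in `S(t)f` to size `O(t)`. -/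
def IsSuperlinear (φ : ℝ≥0 → ℝ≥0∞) : Prop :=
  ∀ M : ℝ≥0, ∀ᶠ r : ℝ≥0 in atTop, ((M * r : ℝ≥0) : ℝ≥0∞) ≤ φ r

lemma IsPenalty.rpow_div_mul_le (hφ : IsPenalty p φ) (hp : 0 < p) {r₀ r : ℝ≥0} (hr₀ : 0 < r₀)
    (hr : r₀ ≤ r) : (((r / r₀) ^ p : ℝ≥0) : ℝ≥0∞) * φ r₀ ≤ φ r := by
  have hr_pos : 0 < r := hr₀.trans_le hr
  have hle : (r₀ / r) ^ p ≤ 1 := NNReal.rpow_le_one (div_le_one_of_le₀ hr zero_le) hp.le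
  have hconv := hφ.convex_rpow (r ^ p) 0 _ _ (add_tsub_cancel_of_le hle)
  rw [← NNReal.mul_rpow, div_mul_cancel₀ _ hr_pos.ne', mul_zero, add_zero, one_div,
    NNReal.rpow_rpow_inv hp.ne', NNReal.rpow_rpow_inv hp.ne',
    NNReal.zero_rpow (inv_ne_zero hp.ne'), hφ.map_zero, mul_zero, add_zero] at hconv
  have hinv : (r / r₀) ^ p * (r₀ / r) ^ p = 1 := by
    rw [← NNReal.mul_rpow, div_mul_div_cancel₀ hr₀.ne', div_self hr_pos.ne', NNReal.one_rpow]
  calc (((r / r₀) ^ p : ℝ≥0) : ℝ≥0∞) * φ r₀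
      ≤ ((r / r₀) ^ p : ℝ≥0) * (((r₀ / r) ^ p : ℝ≥0) * φ r) := by gcongr
    _ = φ r := by rw [← mul_assoc, ← ENNReal.coe_mul, hinv, ENNReal.coe_one, one_mul]

lemma IsPenalty.exists_pos_apply_ne_zero (hφ : IsPenalty p φ) : ∃ r, 0 < r ∧ φ r ≠ 0 := by
  by_contra! hzero
  have hφ0 : ∀ r, φ r = 0 := fun r ↦ (eq_zero_or_pos r).elim (· ▸ hφ.map_zero) (hzero r)
  obtain ⟨a, b, hab⟩ := hφ.not_const
  exact hab ((hφ0 a).trans (hφ0 b).symm)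

theorem IsPenalty.isSuperlinear (hφ : IsPenalty p φ) (hp : 1 < p) : IsSuperlinear φ := by
  intro M
  obtain ⟨r₀, hr₀, hφr₀⟩ := hφ.exists_pos_apply_ne_zero
  obtain ⟨c, hc, hcφ⟩ := ENNReal.lt_iff_exists_nnreal_btwn.1 (pos_iff_ne_zero.2 hφr₀)
  replace hc : 0 < c := by exact_mod_cast hc
  have hlim : Tendsto (fun r : ℝ≥0 ↦ r ^ (p - 1) * (c / r₀ ^ p)) atTop atTop :=
    (NNReal.tendsto_rpow_atTop (sub_pos.2 hp)).atTop_mul_const (by positivity)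
  filter_upwards [hlim.eventually_ge_atTop M, eventually_ge_atTop r₀] with r hM hr
  have hr_ne : r ≠ 0 := (hr₀.trans_le hr).ne'
  calc ((M * r : ℝ≥0) : ℝ≥0∞) ≤ ((r / r₀) ^ p * c : ℝ≥0) := by
        rw [ENNReal.coe_le_coe]
        calc M * r ≤ r ^ (p - 1) * (c / r₀ ^ p) * r := by gcongr
          _ = (r / r₀) ^ p * c := by
            rw [NNReal.rpow_sub_one hr_ne, NNReal.div_rpow]; field_simp
    _ ≤ ((r / r₀) ^ p : ℝ≥0) * φ r₀ := by rw [ENNReal.coe_mul]; gcongr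
    _ ≤ φ r := hφ.rpow_div_mul_le (one_pos.trans hp) hr₀ hr

lemma coe_mul_le_phiStar_add (φ : ℝ≥0 → ℝ≥0∞) (r y : ℝ≥0) :
    ((r * y : ℝ≥0) : ℝ≥0∞) ≤ phiStar φ y + φ r :=
  tsub_le_iff_right.1 (le_iSup (fun x ↦ ((x * y : ℝ≥0) : ℝ≥0∞) - φ x) r)

lemma mul_sub_toReal_le_toReal_phiStar {r y : ℝ≥0} (hr : φ r ≠ ∞) (hy : phiStar φ y ≠ ∞) :
    r * y - (φ r).toReal ≤ (phiStar φ y).toReal := by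
  rw [sub_le_iff_le_add, ← ENNReal.toReal_add hy hr]
  exact ENNReal.toReal_mono (by finiteness) (coe_mul_le_phiStar_add φ r y)

lemma phiStar_ne_top_of_mul_le {R y : ℝ≥0} (hR : ∀ r ≥ R, ((y * r : ℝ≥0) : ℝ≥0∞) ≤ φ r) :
    phiStar φ y ≠ ∞ := by
  refine ne_top_of_le_ne_top (b := ((R * y : ℝ≥0) : ℝ≥0∞)) ENNReal.coe_ne_top
    (iSup_le fun r ↦ ?_)
  rcases le_total R r with hr | hr
  · rw [tsub_eq_zero_of_le (mul_comm r y ▸ hR r hr)]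
    exact zero_le
  · exact tsub_le_self.trans (ENNReal.coe_le_coe.2 (by gcongr))

lemma IsSuperlinear.phiStar_ne_top (hφ : IsSuperlinear φ) (y : ℝ≥0) : phiStar φ y ≠ ∞ :=
  let ⟨_, hR⟩ := eventually_atTop.1 (hφ y)
  phiStar_ne_top_of_mul_le hR

lemma IsSuperlinear.exists_forall_mul_le (hφ : IsSuperlinear φ) (K : ℝ≥0) :
    ∃ R : ℝ≥0, ∀ M ≤ K, ∀ r ≥ R, ((M * r : ℝ≥0) : ℝ≥0∞) ≤ φ r := by
  obtain ⟨R, hR⟩ := eventually_atTop.1 (hφ K)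
  exact ⟨R, fun M hM r hr ↦ (ENNReal.coe_le_coe.2 (by gcongr)).trans (hR r hr)⟩

lemma exists_toReal_phiStar_sub_le (hφ0 : φ 0 = 0) {R y : ℝ≥0}
    (hR : ∀ r ≥ R, ((y * r : ℝ≥0) : ℝ≥0∞) ≤ φ r) {ε : ℝ} (hε : 0 < ε) :
    ∃ r ≤ R, φ r ≠ ∞ ∧ (phiStar φ y).toReal - ε ≤ r * y - (φ r).toReal := by
  have hfin := phiStar_ne_top_of_mul_le hR
  rcases eq_or_ne (phiStar φ y) 0 with hzero | hpos
  · exact ⟨0, zero_le, by simp [hφ0], by simp [hzero, hφ0, hε.le]⟩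
  have hlt : ENNReal.ofReal ((phiStar φ y).toReal - ε) < phiStar φ y := by
    conv_rhs => rw [← ENNReal.ofReal_toReal hfin]
    exact (ENNReal.ofReal_lt_ofReal_iff (ENNReal.toReal_pos hpos hfin)).2 (sub_lt_self _ hε)
  obtain ⟨r, hr⟩ := lt_iSup_iff.1 hlt
  have hφr : φ r < (r * y : ℝ≥0) := tsub_pos_iff_lt.1 (zero_le.trans_lt hr)
  refine ⟨r, le_of_not_ge fun hRr ↦ hφr.not_ge (mul_comm r y ▸ hR r hRr), hφr.ne_top, ?_⟩
  have := ENNReal.ofReal_le_iff_le_toReal (by finiteness) |>.1 hr.le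
  rwa [ENNReal.toReal_sub_of_le hφr.le (by finiteness), ENNReal.coe_toReal,
    NNReal.coe_mul] at this

variable {E : Type*} [NormedAddCommGroup E] [InnerProductSpace ℝ E] [CompleteSpace E]

lemma nnnorm_gradient (f : E → ℝ) (x : E) : ‖gradient f x‖₊ = ‖fderiv ℝ f x‖₊ :=
  LinearIsometryEquiv.nnnorm_map _ _

lemma exists_norm_le_apply_eq_mul (L : E →L[ℝ] ℝ) (r : ℝ≥0) : ∃ v, ‖v‖₊ ≤ r ∧ L v = r * ‖L‖ := by
  set g : E := (InnerProductSpace.toDual ℝ E).symm L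
  have hg : ‖g‖ = ‖L‖ := LinearIsometryEquiv.norm_map _ _
  rcases eq_or_ne g 0 with hg0 | hg0
  · exact ⟨0, by simp, by rw [← hg, hg0]; simp⟩
  · have hnorm : ‖g‖ ≠ 0 := norm_ne_zero_iff.2 hg0
    refine ⟨((r : ℝ) / ‖g‖) • g, ?_, ?_⟩
    · rw [← NNReal.coe_le_coe, coe_nnnorm, norm_smul, norm_div, norm_norm,
        div_mul_cancel₀ _ hnorm]
      simp
    · have hLg : L g = ‖g‖ ^ 2 := by
        rw [← real_inner_self_eq_norm_sq, InnerProductSpace.toDual_symm_apply]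
      rw [map_smul, hLg, ← hg, smul_eq_mul]
      field_simp

lemma exists_toReal_phiStar_nnnorm_sub_le (hφ : Monotone φ) (hφ0 : φ 0 = 0)
    (L : E →L[ℝ] ℝ) {R : ℝ≥0} (hR : ∀ r ≥ R, ((‖L‖₊ * r : ℝ≥0) : ℝ≥0∞) ≤ φ r) {ε : ℝ}
    (hε : 0 < ε) : ∃ v, ‖v‖ ≤ R ∧ φ ‖v‖₊ ≠ ∞ ∧
      (phiStar φ ‖L‖₊).toReal - ε ≤ L v - (φ ‖v‖₊).toReal := by
  obtain ⟨r, hrR, hφr, hmax⟩ := exists_toReal_phiStar_sub_le hφ0 hR hε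
  obtain ⟨v, hvr, hLv⟩ := exists_norm_le_apply_eq_mul L r
  refine ⟨v, hvr.trans hrR, ne_top_of_le_ne_top hφr (hφ hvr), hmax.trans ?_⟩
  rw [hLv, coe_nnnorm]
  gcongr
  exact hφ hvr

end Penalty

section OneStepOperator

lemma integral_comp_add_le_add {E : Type*} [NormedAddCommGroup E] [MeasurableSpace E]
    [BorelSpace E] [SecondCountableTopology E] {ν : Measure E} [IsProbabilityMeasure ν]
    {g h : E → ℝ} (hg : IsBUC g) (hh : IsBUC h) {x x' : E} {ε : ℝ}
    (hgh : ∀ y, g (x + y) ≤ h (x' + y) + ε) :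
    ∫ y, g (x + y) ∂ν ≤ (∫ y, h (x' + y) ∂ν) + ε := by
  have hh' : Integrable (fun y ↦ h (x' + y)) ν := hh.integrable_comp (by fun_prop)
  calc ∫ y, g (x + y) ∂ν ≤ ∫ y, (h (x' + y) + ε) ∂ν :=
        integral_mono (hg.integrable_comp (by fun_prop)) (hh'.add (integrable_const ε)) hgh
    _ = (∫ y, h (x' + y) ∂ν) + ε := by
        simp [integral_add hh' (integrable_const ε)]

lemma IsBUC.of_forall_le_add {E : Type*} [NormedAddCommGroup E] {g h : E → ℝ} (hg : IsBUC g)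
    (hgh : ∀ x x' ε, (∀ y, g (x + y) ≤ g (x' + y) + ε) → h x ≤ h x' + ε) : IsBUC h where
  uniformContinuous := by
    refine Metric.uniformContinuous_iff_le.2 fun ε hε ↦ ?_
    obtain ⟨δ, hδ, hgδ⟩ := Metric.uniformContinuous_iff_le.1 hg.uniformContinuous ε hε
    have hle : ∀ x x', dist x x' ≤ δ → h x ≤ h x' + ε := fun x x' hxx' ↦ by
      refine hgh x x' ε fun y ↦ ?_
      have := hgδ ((dist_add_right x x' y).trans_le hxx')
      linarith [(abs_le.1 (Real.dist_eq _ _ ▸ this)).2]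
    refine ⟨δ, hδ, fun x x' hxx' ↦ ?_⟩
    rw [Real.dist_eq, abs_le]
    constructor <;> linarith [hle x x' hxx', hle x' x (dist_comm x x' ▸ hxx')]
  bounded := by
    obtain ⟨B, hB⟩ := hg.bounded
    have hle : ∀ x x', h x ≤ h x' + 2 * B := fun x x' ↦ hgh x x' _ fun y ↦ by
      linarith [(abs_le.1 (hB (x + y))).2, (abs_le.1 (hB (x' + y))).1]
    refine ⟨|h 0| + 2 * B, fun x ↦ abs_le.2 ⟨?_, ?_⟩⟩
    · linarith [hle 0 x, neg_abs_le (h 0)]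
    · linarith [hle x 0, le_abs_self (h 0)]

variable {d : ℕ} {p t : ℝ} {φ : ℝ≥0 → ℝ≥0∞} {μt ν : Measure (Ed d)} {g h : Ed d → ℝ}

lemma phit_zero (hφ0 : φ 0 = 0) (t : ℝ) : phit φ t 0 = 0 := by
  simp [phit, hφ0]

lemma phit_Wp_self [IsProbabilityMeasure μt] (hp : 0 < p) (hφ0 : φ 0 = 0) (t : ℝ) :
    phit φ t (Wp p μt μt).toNNReal = 0 := by
  rw [Wp_self hp, Real.toNNReal_zero, phit_zero hφ0]

lemma phit_Wp_map_add_const_le [IsProbabilityMeasure μt] (hp : 0 < p) (hφ : Monotone φ)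
    (hφ0 : φ 0 = 0) (ht : 0 ≤ t) {v : Ed d} {c : ℝ} (hv : φ ‖v‖₊ ≤ ENNReal.ofReal c) :
    phit φ t (Wp p μt (μt.map (· + t • v))).toNNReal ≤ ENNReal.ofReal (t * c) := by
  rcases ht.eq_or_lt with rfl | ht
  · simp [phit_Wp_self hp hφ0]
  · rw [phit, if_pos ht, ENNReal.ofReal_mul ht.le]
    refine mul_le_mul_right ((hφ ?_).trans hv) _
    rw [div_le_iff₀ (Real.toNNReal_pos.2 ht), Real.toNNReal_le_iff_le_coe, NNReal.coe_mul,
      Real.coe_toNNReal _ ht.le, coe_nnnorm, mul_comm]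
    simpa [norm_smul, abs_of_pos ht] using Wp_map_add_const_le (μ := μt) hp (t • v)

lemma exists_eq_mul_of_phit_le (ht : 0 < t) {w c : ℝ} (hw : 0 ≤ w) (hc : 0 ≤ c)
    (hpen : phit φ t w.toNNReal ≤ ENNReal.ofReal c) :
    ∃ r : ℝ≥0, w = t * r ∧ φ r ≠ ∞ ∧ t * (φ r).toReal ≤ c := by
  have htn : (t.toNNReal : ℝ≥0∞) ≠ 0 := by simpa using ht
  rw [phit, if_pos ht] at hpen
  refine ⟨w.toNNReal / t.toNNReal, ?_, fun htop ↦ ?_, ?_⟩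
  · rw [NNReal.coe_div, Real.coe_toNNReal _ hw, Real.coe_toNNReal _ ht.le, mul_div_cancel₀ _ ht.ne']
  · rw [htop, ENNReal.mul_top htn] at hpen
    exact ENNReal.ofReal_ne_top (top_le_iff.1 hpen)
  · simpa [ht.le] using ENNReal.toReal_le_of_le_ofReal hc hpen

lemma le_Sop (hg : IsBUC g) (hν : MemPp p ν) {c : ℝ} (hc : 0 ≤ c)
    (hpen : phit φ t (Wp p μt ν).toNNReal ≤ ENNReal.ofReal c) (x : Ed d) :
    (∫ y, g (x + y) ∂ν) - c ≤ Sop p φ μt t g x := by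
  obtain ⟨B, hB⟩ := hg.bounded
  refine le_csSup ⟨B, ?_⟩ ⟨ν, hν, c, hc, hpen, rfl⟩
  rintro _ ⟨ν, ⟨_, -⟩, c, hc, -, rfl⟩
  have hle : ‖∫ y, g (x + y) ∂ν‖ ≤ B := by
    simpa using norm_integral_le_of_norm_le_const (μ := ν) (ae_of_all _ fun y ↦ hB (x + y))
  linarith [(abs_le.1 hle).2]

lemma Sop_le (hp : 0 < p) (hφ0 : φ 0 = 0) (hμt : MemPp p μt) {x : Ed d} {b : ℝ}
    (hb : ∀ ν : Measure (Ed d), MemPp p ν → ∀ c : ℝ, 0 ≤ c →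
      phit φ t (Wp p μt ν).toNNReal ≤ ENNReal.ofReal c → (∫ y, g (x + y) ∂ν) - c ≤ b) :
    Sop p φ μt t g x ≤ b := by
  have := hμt.1
  refine csSup_le ⟨_, μt, hμt, 0, le_rfl, by simp [phit_Wp_self hp hφ0], rfl⟩ ?_
  rintro _ ⟨ν, hν, c, hc, hpen, rfl⟩
  exact hb ν hν c hc hpen

lemma Sop_le_Sop_add (hp : 0 < p) (hφ0 : φ 0 = 0) (hμt : MemPp p μt) (hg : IsBUC g)
    (hh : IsBUC h) {x x' : Ed d} {ε : ℝ} (hgh : ∀ y, g (x + y) ≤ h (x' + y) + ε) :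
    Sop p φ μt t g x ≤ Sop p φ μt t h x' + ε :=
  Sop_le hp hφ0 hμt fun ν hν c hc hpen ↦ by
    have := hν.1
    linarith [le_Sop hh hν hc hpen x', integral_comp_add_le_add (ν := ν) hg hh hgh]

lemma isBUC_Sop (hp : 0 < p) (hφ0 : φ 0 = 0) (hμt : MemPp p μt) (hg : IsBUC g) (t : ℝ) :
    IsBUC (Sop p φ μt t g) :=
  hg.of_forall_le_add fun _ _ _ ↦ Sop_le_Sop_add hp hφ0 hμt hg hg

end OneStepOperator

section Drift

variable {d : ℕ} {p : ℝ} {φ : ℝ≥0 → ℝ≥0∞} {μ : ℝ → Measure (Ed d)} {v : Ed d} {c s t : ℝ}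
  {f g : Ed d → ℝ}

/-- The semigroup of the Lévy process with extra drift `v`, charged at rate `c`. It is generated
by the competitors `ν = μ_s ∗ δ_{s v}` in the supremum defining `Sop`. -/
def driftedSmu (μ : ℝ → Measure (Ed d)) (v : Ed d) (c s : ℝ) (f : Ed d → ℝ) (x : Ed d) : ℝ :=
  Smu μ s f (x + s • v) - s * c

lemma isBUC_driftedSmu [IsProbabilityMeasure (μ s)] (hg : IsBUC g) :
    IsBUC (driftedSmu μ v c s g) := by
  refine hg.of_forall_le_add fun x x' ε hle ↦ ?_
  have := integral_comp_add_le_add (ν := μ s) hg hg (x := x + s • v) (x' := x' + s • v) (ε := ε)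
    fun y ↦ by simpa only [add_assoc] using hle (s • v + y)
  simp only [driftedSmu, Smu]
  linarith

lemma driftedSmu_add (hμ : IsConvSemigroup p μ) (hs : 0 ≤ s) (ht : 0 ≤ t) (hf : IsBUC f) :
    driftedSmu μ v c (s + t) f = driftedSmu μ v c s (driftedSmu μ v c t f) := by
  have := (hμ.2.2 s hs).1
  have := (hμ.2.2 t ht).1
  ext x
  have hconv : ∫ y, f (x + (s + t) • v + y) ∂(μ (s + t)) =
      ∫ y, ∫ z, f (x + s • v + y + t • v + z) ∂(μ t) ∂(μ s) := by
    rw [hμ.2.1 s t hs ht, integral_conv (hf.integrable_comp (by fun_prop))]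
    congr! 5 with y z
    module
  have hint : Integrable (fun y ↦ ∫ z, f (x + s • v + y + t • v + z) ∂(μ t)) (μ s) :=
    (hf.integrable_comp (P := (μ s).prod (μ t)) (X := fun q ↦ x + s • v + q.1 + t • v + q.2)
      (by fun_prop)).integral_prod_left
  simp only [driftedSmu, Smu]
  rw [hconv, integral_sub hint (integrable_const _), integral_const, probReal_univ, one_smul]
  ring

lemma driftedSmu_le_Sop (hp : 0 < p) (hφ : Monotone φ) (hφ0 : φ 0 = 0) (hμs : MemPp p (μ s))
    (hc : 0 ≤ c) (hv : φ ‖v‖₊ ≤ ENNReal.ofReal c) (hs : 0 ≤ s) (hg : IsBUC g) (x : Ed d) :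
    driftedSmu μ v c s g x ≤ Sop p φ (μ s) s g x := by
  have := hμs.1
  have hle := le_Sop hg (hμs.map_add_const hp (s • v)) (by positivity)
    (phit_Wp_map_add_const_le hp hφ hφ0 hs hv) x
  have hcont : Continuous fun y ↦ g (x + y) := hg.uniformContinuous.continuous.comp (by fun_prop)
  rw [integral_map (by fun_prop) hcont.aestronglyMeasurable] at hle
  simpa only [driftedSmu, Smu, add_assoc, add_comm (s • v)] using hle

lemma isBUC_iterate_Sop (hp : 0 < p) (hφ0 : φ 0 = 0) {μt : Measure (Ed d)} (hμt : MemPp p μt)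
    (hg : IsBUC g) (k : ℕ) : IsBUC ((Sop p φ μt t)^[k] g) := by
  induction k with
  | zero => exact hg
  | succ k ih => rw [Function.iterate_succ_apply']; exact isBUC_Sop hp hφ0 hμt ih t

lemma driftedSmu_le_iterate_Sop (hp : 0 < p) (hφ : Monotone φ) (hφ0 : φ 0 = 0)
    (hμ : IsConvSemigroup p μ) (hc : 0 ≤ c) (hv : φ ‖v‖₊ ≤ ENNReal.ofReal c) (hs : 0 ≤ s)
    (ht : 0 ≤ t) (hf : IsBUC f) (hg : IsBUC g) (hfg : ∀ x, driftedSmu μ v c t f x ≤ g x) (k : ℕ)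
    (x : Ed d) : driftedSmu μ v c (k * s + t) f x ≤ (Sop p φ (μ s) s)^[k] g x := by
  induction k generalizing x with
  | zero => simpa using hfg x
  | succ k ih =>
    have hμs := hμ.2.2 s hs
    have hkst : 0 ≤ k * s + t := by positivity
    have := (hμ.2.2 _ hkst).1
    have hdrift : IsBUC (driftedSmu μ v c (k * s + t) f) := isBUC_driftedSmu hf
    have hiter : IsBUC ((Sop p φ (μ s) s)^[k] g) := isBUC_iterate_Sop hp hφ0 hμs hg k
    calc driftedSmu μ v c ((k + 1 : ℕ) * s + t) f x
        = driftedSmu μ v c s (driftedSmu μ v c (k * s + t) f) x := by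
          rw [← driftedSmu_add hμ hs hkst hf]; congr 1; push_cast; ring
      _ ≤ Sop p φ (μ s) s (driftedSmu μ v c (k * s + t) f) x :=
          driftedSmu_le_Sop hp hφ hφ0 hμs hc hv hs hdrift x
      _ ≤ Sop p φ (μ s) s ((Sop p φ (μ s) s)^[k] g) x := by
          simpa using Sop_le_Sop_add (t := s) hp hφ0 hμs hdrift hiter (x := x) (x' := x) (ε := 0)
            fun y ↦ by simpa using ih (x + y)
      _ = (Sop p φ (μ s) s)^[k + 1] g x := by rw [Function.iterate_succ_apply']

lemma driftedSmu_le_SiterN (hp : 0 < p) (hφ : Monotone φ) (hφ0 : φ 0 = 0)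
    (hμ : IsConvSemigroup p μ) (hc : 0 ≤ c) (hv : φ ‖v‖₊ ≤ ENNReal.ofReal c) (ht : 0 ≤ t)
    (hf : IsBUC f) (n : ℕ) (x : Ed d) :
    driftedSmu μ v c t f x ≤ SiterN p φ μ n t f x := by
  have hrest : 0 ≤ t - ⌊(2 : ℝ) ^ n * t⌋₊ * ((2 : ℝ) ^ n)⁻¹ := by
    have hfloor := Nat.floor_le (a := (2 : ℝ) ^ n * t) (by positivity)
    rw [sub_nonneg, ← div_eq_mul_inv, div_le_iff₀ (by positivity), mul_comm t]
    exact hfloor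
  have hle := driftedSmu_le_iterate_Sop (s := ((2 : ℝ) ^ n)⁻¹) hp hφ hφ0 hμ hc hv (by positivity)
    hrest hf (isBUC_Sop hp hφ0 (hμ.2.2 _ hrest) hf _)
    (driftedSmu_le_Sop hp hφ hφ0 (hμ.2.2 _ hrest) hc hv hrest hf) ⌊(2 : ℝ) ^ n * t⌋₊ x
  rwa [add_sub_cancel] at hle

theorem driftedSmu_le_Slim (hp : 0 < p) (hφ : Monotone φ) (hφ0 : φ 0 = 0)
    (hμ : IsConvSemigroup p μ) (hc : 0 ≤ c) (hv : φ ‖v‖₊ ≤ ENNReal.ofReal c) (ht : 0 ≤ t)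
    (hf : IsBUC f) (x : Ed d) : driftedSmu μ v c t f x ≤ Slim p φ μ t f x :=
  le_ciInf fun n ↦ driftedSmu_le_SiterN hp hφ hφ0 hμ hc hv ht hf n x

theorem Slim_le_Sop (hp : 0 < p) (hφ : Monotone φ) (hφ0 : φ 0 = 0) (hμ : IsConvSemigroup p μ)
    (ht : 0 ≤ t) (ht1 : t < 1) (hf : IsBUC f) (x : Ed d) :
    Slim p φ μ t f x ≤ Sop p φ (μ t) t f x := by
  have hbdd : BddBelow (range fun n ↦ SiterN p φ μ n t f x) := by
    refine ⟨driftedSmu μ 0 0 t f x, ?_⟩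
    rintro _ ⟨n, rfl⟩
    exact driftedSmu_le_SiterN hp hφ hφ0 hμ le_rfl (by simp [hφ0]) ht hf n x
  refine (ciInf_le hbdd 0).trans_eq ?_
  simp [SiterN, Nat.floor_eq_zero.2 ht1]

end Drift

section ShortTimeAsymptotics

variable {d : ℕ} {p : ℝ} {φ : ℝ≥0 → ℝ≥0∞} {μ : ℝ → Measure (Ed d)} {f : Ed d → ℝ}

lemma integral_sub_le_mul_toReal_phiStar_add (hp : 1 < p) {μt ν : Measure (Ed d)}
    (hμt : MemPp p μt) (hν : MemPp p ν) (hf : IsBUC f) {K R r : ℝ≥0} (hK : LipschitzWith K f)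
    (hR : ∀ r ≥ R, ((K * r : ℝ≥0) : ℝ≥0∞) ≤ φ r) {x : Ed d}
    (hstar : phiStar φ ‖fderiv ℝ f x‖₊ ≠ ∞) {t ε : ℝ} (ht : 0 < t) (hε : 0 ≤ ε)
    (hr : Wp p μt ν = t * r) (hφr : φ r ≠ ∞)
    (hexp : r ≤ R → (∫ y, f (x + y) ∂ν) - ∫ y, f (x + y) ∂μt ≤
      (‖fderiv ℝ f x‖ + ε) * Wp p μt ν) :
    (∫ y, f (x + y) ∂ν) - t * (φ r).toReal ≤
      (∫ y, f (x + y) ∂μt) + t * ((phiStar φ ‖fderiv ℝ f x‖₊).toReal + R * ε) := by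
  have := hμt.1
  have := hν.1
  rcases le_total R r with hRr | hrR
  · have hKx : LipschitzWith (K * 1) fun y ↦ f (x + y) := hK.comp (isometry_add_left x).lipschitz
    have hlip : (∫ y, f (x + y) ∂ν) - ∫ y, f (x + y) ∂μt ≤ K * Wp p μt ν :=
      integral_sub_integral_le_mul_Wp hp.le hμt hν (mul_one K ▸ hKx)
        (hf.integrable_comp (by fun_prop)) (hf.integrable_comp (by fun_prop))
    have hKr : (K : ℝ) * r ≤ (φ r).toReal := by
      simpa using ENNReal.toReal_mono hφr (hR r hRr)
    have hnonneg : 0 ≤ (phiStar φ ‖fderiv ℝ f x‖₊).toReal + R * ε := by positivity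
    rw [hr] at hlip
    nlinarith
  · have hFY := mul_sub_toReal_le_toReal_phiStar hφr hstar
    have hrε : (r : ℝ) * ε ≤ R * ε := by gcongr
    rw [hr] at hexp
    rw [coe_nnnorm] at hFY
    nlinarith [hexp hrR]

theorem IsBUC1.exists_Sop_le (hp : 1 < p) (hφ0 : φ 0 = 0) (hφ : IsSuperlinear φ) (hf : IsBUC1 f)
    {ε : ℝ} (hε : 0 < ε) : ∃ δ > 0, ∃ R : ℝ≥0, ∀ (μt : Measure (Ed d)) (t : ℝ), MemPp p μt →
      0 < t → Wp p μt (Measure.dirac 0) + t * R < δ → ∀ x,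
      Sop p φ μt t f x ≤
        (∫ y, f (x + y) ∂μt) + t * ((phiStar φ ‖fderiv ℝ f x‖₊).toReal + ε) := by
  obtain ⟨K, hK, -⟩ := hf.exists_lipschitzWith
  obtain ⟨R, hR⟩ := eventually_atTop.1 (hφ K)
  have hεR : 0 < ε / (R + 1) := by positivity
  obtain ⟨δ, hδ, hexp⟩ := hf.exists_integral_sub_integral_le_mul_Wp hp hεR
  refine ⟨δ, hδ, R, fun μt t hμt ht hsmall x ↦ ?_⟩
  refine Sop_le (one_pos.trans hp) hφ0 hμt fun ν hν c hc hpen ↦ ?_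
  obtain ⟨r, hr, hφr, hrc⟩ := exists_eq_mul_of_phit_le ht Wp_nonneg hc hpen
  have hle := integral_sub_le_mul_toReal_phiStar_add hp hμt hν hf.isBUC hK hR
    (hφ.phiStar_ne_top _) ht hεR.le hr hφr fun hrR ↦ hexp μt ν hμt hν ?_ x
  · have hRε : R * (ε / (R + 1)) ≤ ε := by
      rw [mul_div_assoc', div_le_iff₀ (by positivity)]
      nlinarith
    nlinarith
  · rw [hr]
    exact lt_of_le_of_lt (by gcongr) hsmall

lemma IsBUC1.exists_mul_fderiv_sub_le (hp : 1 < p) (hf : IsBUC1 f) {ε : ℝ} (hε : 0 < ε) :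
    ∃ δ > 0, ∀ (μt : Measure (Ed d)) (t R : ℝ) (v : Ed d), MemPp p μt → 0 ≤ t → ‖v‖ ≤ R →
      Wp p μt (Measure.dirac 0) + t * R < δ → ∀ x,
      t * (fderiv ℝ f x v - R * ε) ≤
        (∫ y, f (x + t • v + y) ∂μt) - ∫ y, f (x + y) ∂μt := by
  obtain ⟨δ, hδ, hexp⟩ := hf.exists_norm_integral_sub_le (Ω := Ed d) hp hε
  refine ⟨δ, hδ, fun μt t R v hμt ht hv hsmall x ↦ ?_⟩
  have := hμt.1
  have hp0 : 0 < p := one_pos.trans hp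
  have htv : eLpNorm (fun _ ↦ t • v) (ENNReal.ofReal p) μt ≤ ENNReal.ofReal (t * R) := by
    rw [eLpNorm_const _ (by simpa using hp0) (IsProbabilityMeasure.ne_zero μt), measure_univ,
      ENNReal.one_rpow, mul_one, ← ofReal_norm, norm_smul, Real.norm_of_nonneg ht]
    gcongr
  have hle := hexp μt id (fun _ ↦ t • v) _ (t * R) (by fun_prop) (by fun_prop) Wp_nonneg
    (mul_nonneg ht ((norm_nonneg v).trans hv)) hsmall.le (eLpNorm_id_le_Wp_dirac_zero hp0 hμt)
    htv x
  simp only [id, integral_const, probReal_univ, map_smul, smul_eq_mul,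
    add_right_comm x _ (t • v)] at hle
  linarith [(abs_le.1 hle).1]

theorem IsBUC1.exists_le_Slim (hp : 1 < p) (hφ : Monotone φ) (hφ0 : φ 0 = 0)
    (hφ_super : IsSuperlinear φ) (hμ : IsConvSemigroup p μ) (hf : IsBUC1 f) {ε : ℝ} (hε : 0 < ε) :
    ∃ δ > 0, ∃ R : ℝ≥0, ∀ t, 0 < t → Wp p (μ t) (Measure.dirac 0) + t * R < δ → ∀ x,
      Smu μ t f x + t * ((phiStar φ ‖fderiv ℝ f x‖₊).toReal - ε) ≤ Slim p φ μ t f x := by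
  obtain ⟨K, -, hK⟩ := hf.exists_lipschitzWith
  obtain ⟨R, hR⟩ := hφ_super.exists_forall_mul_le K
  have hεR : 0 < ε / 2 / (R + 1) := by positivity
  obtain ⟨δ, hδ, hexp⟩ := hf.exists_mul_fderiv_sub_le hp hεR
  refine ⟨δ, hδ, R, fun t ht hsmall x ↦ ?_⟩
  obtain ⟨v, hvR, hφv, hmax⟩ := exists_toReal_phiStar_nnnorm_sub_le hφ hφ0 (fderiv ℝ f x)
    (hR _ (hK x)) (half_pos hε)
  have hdrift := driftedSmu_le_Slim (one_pos.trans hp) hφ hφ0 hμ ENNReal.toReal_nonneg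
    (ENNReal.ofReal_toReal hφv).ge ht.le hf.isBUC x
  have hfirst := hexp (μ t) t R v (hμ.2.2 t ht.le) ht.le hvR hsmall x
  have hRε : R * (ε / 2 / (R + 1)) ≤ ε / 2 := by
    rw [mul_div_assoc', div_le_iff₀ (by positivity)]
    nlinarith
  simp only [driftedSmu, Smu] at hdrift ⊢
  nlinarith

lemma WContinuousAtZero.eventually_add_mul_lt (hμ0 : WContinuousAtZero p μ) (R : ℝ) {δ : ℝ}
    (hδ : 0 < δ) : ∀ᶠ t in 𝓝[>] 0, Wp p (μ t) (Measure.dirac 0) + t * R < δ := by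
  have hlin : Tendsto (fun t : ℝ ↦ t * R) (𝓝[>] 0) (𝓝 (0 * R)) :=
    (tendsto_id.mul_const R).mono_left nhdsWithin_le_nhds
  have hsum := hμ0.add hlin
  rw [zero_mul, add_zero] at hsum
  exact hsum.eventually_lt_const hδ

theorem tendstoUniformly_Slim_sub_Smu_div (hp : 1 < p) (hφ : Monotone φ) (hφ0 : φ 0 = 0)
    (hφ_super : IsSuperlinear φ) (hμ : IsConvSemigroup p μ) (hμ0 : WContinuousAtZero p μ)
    (hf : IsBUC1 f) :
    TendstoUniformly (fun t x ↦ (Slim p φ μ t f x - Smu μ t f x) / t)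
      (fun x ↦ (phiStar φ ‖gradient f x‖₊).toReal) (𝓝[>] 0) := by
  refine Metric.tendstoUniformly_iff.2 fun ε hε ↦ ?_
  obtain ⟨δ₁, hδ₁, R₁, hupper⟩ := hf.exists_Sop_le hp hφ0 hφ_super (half_pos hε)
  obtain ⟨δ₂, hδ₂, R₂, hlower⟩ := hf.exists_le_Slim hp hφ hφ0 hφ_super hμ (half_pos hε)
  filter_upwards [Ioo_mem_nhdsGT one_pos, hμ0.eventually_add_mul_lt R₁ hδ₁,
    hμ0.eventually_add_mul_lt R₂ hδ₂] with t ⟨ht, ht1⟩ hsmall₁ hsmall₂ x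
  have hle := (Slim_le_Sop (one_pos.trans hp) hφ hφ0 hμ ht.le ht1 hf.isBUC x).trans
    (hupper (μ t) t (hμ.2.2 t ht.le) ht hsmall₁ x)
  have hge := hlower t ht hsmall₂ x
  have hdiv_le : (Slim p φ μ t f x - Smu μ t f x) / t ≤
      (phiStar φ ‖fderiv ℝ f x‖₊).toReal + ε / 2 := by
    rw [div_le_iff₀' ht, sub_le_iff_le_add']
    exact hle
  have hle_div : (phiStar φ ‖fderiv ℝ f x‖₊).toReal - ε / 2 ≤
      (Slim p φ μ t f x - Smu μ t f x) / t := by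
    rw [le_div_iff₀' ht, le_sub_iff_add_le']
    exact hge
  rw [nnnorm_gradient, dist_comm, Real.dist_eq, abs_lt]
  constructor <;> linarith

lemma IsC01.isBUC1 (hf : IsC01 f) : IsBUC1 f where
  differentiable := hf.2.1.differentiable one_ne_zero
  bounded := (isBUC_of_tendsto_cocompact hf.1.1 hf.1.2).bounded
  fderiv_isBUC := by
    refine isBUC_of_tendsto_cocompact (hf.2.1.continuous_fderiv one_ne_zero)
      (tendsto_zero_iff_norm_tendsto_zero.2 ?_)
    simpa only [← coe_nnnorm, nnnorm_gradient] using tendsto_zero_iff_norm_tendsto_zero.1 hf.2.2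

theorem stmt_4_general (hp : 1 < p) (hφ : Monotone φ) (hφ0 : φ 0 = 0) (hφ_super : IsSuperlinear φ)
    (hμ : IsConvSemigroup p μ) (hμ0 : WContinuousAtZero p μ) {Af : Ed d → ℝ}
    (hfdom : HasGenerator μ f Af) (hf : IsBUC1 f) :
    (∀ x, phiStar φ ‖gradient f x‖₊ ≠ ∞) ∧
    TendstoUniformly (fun t x ↦ (Slim p φ μ t f x - f x) / t)
      (fun x ↦ Af x + (phiStar φ ‖gradient f x‖₊).toReal) (𝓝[>] 0) := by
  refine ⟨fun x ↦ hφ_super.phiStar_ne_top _, ?_⟩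
  have hsplit : (fun t x ↦ (Slim p φ μ t f x - f x) / t) =
      (fun t x ↦ (Smu μ t f x - f x) / t) + fun t x ↦ (Slim p φ μ t f x - Smu μ t f x) / t := by
    ext t x
    simp only [Pi.add_apply]
    ring
  rw [hsplit]
  exact TendstoUniformly.add hfdom
    (tendstoUniformly_Slim_sub_Smu_div hp hφ hφ0 hφ_super hμ hμ0 hf)

end ShortTimeAsymptotics

/-- for `f ∈ D(A^μ) ∩ C₀¹(ℝ^d)`,
`(𝒮(t)f − f)/t → A^μ f + φ*(|∇f|)` uniformly as `t ↓ 0`. -/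
theorem stmt_4 (d : ℕ) (hd : 1 ≤ d) (p : ℝ) (hp : 1 < p)
    (φ : ℝ≥0 → ℝ≥0∞) (hφ : IsPenalty p φ)
    (μ : ℝ → Measure (Ed d)) (hμ : IsConvSemigroup p μ) (hμ0 : WContinuousAtZero p μ)
    (f Af : Ed d → ℝ) (hfdom : HasGenerator μ f Af) (hf : IsC01 f) :
    (∀ x, phiStar φ ‖gradient f x‖₊ ≠ ∞) ∧
    TendstoUniformly (fun t x => (Slim p φ μ t f x - f x) / t)
      (fun x => Af x + (phiStar φ ‖gradient f x‖₊).toReal) (𝓝[>] (0:ℝ)) :=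
  stmt_4_general hp hφ.mono hφ.map_zero (hφ.isSuperlinear hp) hμ hμ0 hfdom hf.isBUC1
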